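/- Let λ, σ, τ > 0 be real, p, q complex with Re(p) > 0, Re(q) > 0, η₂, η₃ complex with Re(η₃) > Re(η₂) > 0, and z any complex number. Then the extended confluent hypergeometric function satisfies Φ_{p,q}^{λ;σ,τ}(η₂; η₃; z) = (1 / B(η₂, η₃−η₂)) · ∫₀¹ t^{η₂-1} (1-t)^{η₃−η₂−1} e^{zt} E_λ(−p/t^σ) E_λ(−q/(1-t)^τ) dt. -/

import Mathlib

open MeasureTheory Set Complex

/-- The classical Mittag-Leffler function `E_λ(x) = Σ xⁿ / Γ(λn+1)`. -/
noncomputable def mlE (lam : ℝ) (x : ℂ) : ℂ :=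
  ∑' n : ℕ, x ^ n / Complex.Gamma (lam * n + 1)

/-- The extended beta function
`B_{p,q}^{λ;σ,τ}(η₁,η₂) = ∫₀¹ t^{η₁-1}(1-t)^{η₂-1} E_λ(-p/t^σ) E_λ(-q/(1-t)^τ) dt`. -/
noncomputable def extBeta (lam sig tau : ℝ) (p q e1 e2 : ℂ) : ℂ :=
  ∫ t in Ioo (0:ℝ) 1,
    (t : ℂ) ^ (e1 - 1) * (1 - (t : ℂ)) ^ (e2 - 1) *
      mlE lam (-p / (t : ℂ) ^ (sig : ℂ)) * mlE lam (-q / (1 - (t : ℂ)) ^ (tau : ℂ))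

/-- The extended confluent hypergeometric function
`Φ_{p,q}^{λ;σ,τ}(η₂;η₃;z) = Σ (B_{p,q}^{λ;σ,τ}(η₂+n,η₃-η₂)/B(η₂,η₃-η₂)) zⁿ/n!`. -/
noncomputable def extPhi (lam sig tau : ℝ) (p q e2 e3 z : ℂ) : ℂ :=
  ∑' n : ℕ,
    (extBeta lam sig tau p q (e2 + n) (e3 - e2) / Complex.betaIntegral e2 (e3 - e2)) *
    z ^ n / (Nat.factorial n : ℂ)

/-!
Let `w` be the integrand of the extended beta function. If `w` is integrable on `(0, 1)`, expand
`exp (z * t)` and integrate termwise. But `w` need not be integrable, because `E_λ` may grow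
exponentially along a ray. Then no moment `t ^ n * w` is integrable either, so that all the
integrals involved have the junk value `0`. Multiplication by `t ^ n` could only restore
integrability at `t = 0`, and it does not: put `c = -p` and `u = t ^ (-σ / λ)`.

* If `c = s ^ λ` with `0 < re s`, the Laplace transform of `u ↦ E_λ(c u ^ λ)` continues to
  `s ^ (λ - 1) / (s ^ λ - c)`, which has a pole in the right half-plane. Hence
  `u ^ M * E_λ(c u ^ λ)` is not integrable at infinity, for any real `M`.
* Otherwise, representing `E_λ` by an integral over the line `re s = 1` yields
  `E_λ(c u ^ λ) = O(u ^ ε)` for every `ε > 0`, so `w` is integrable at `t = 0` to begin with.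

The factor of `w` in `1 - t` is analytic at `0`, so there it is either identically zero or
bounded below by a power of `t`.
-/

open Filter Topology
open scoped Real

/-! ### Parametric integrals and complex powers -/

open Metric in
theorem differentiableAt_integral_of_norm_le {α E : Type*} [MeasurableSpace α] {μ : Measure α}
    [NormedAddCommGroup E] [NormedSpace ℂ E] {F : ℂ → α → E} {z₀ : ℂ} {r : ℝ} {bound : α → ℝ}
    (hr : 0 < r) (hmeas : ∀ z ∈ ball z₀ r, AEStronglyMeasurable (F z) μ)
    (hdiff : ∀ᵐ x ∂μ, DifferentiableOn ℂ (F · x) (ball z₀ r))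
    (hbound : ∀ᵐ x ∂μ, ∀ z ∈ ball z₀ r, ‖F z x‖ ≤ bound x) (hint : Integrable bound μ) :
    DifferentiableAt ℂ (fun z ↦ ∫ x, F z x ∂μ) z₀ := by
  classical
  have hball : ∀ᶠ z in 𝓝 z₀, z ∈ ball z₀ r := ball_mem_nhds z₀ hr
  have hz₀ : z₀ ∈ ball z₀ r := mem_ball_self hr
  have hderiv : ∀ᵐ x ∂μ, ∀ z ∈ ball z₀ r, HasDerivAt (F · x) (deriv (F · x) z) z := by
    filter_upwards [hdiff] with x hx z hz
    exact (hx.differentiableAt (isOpen_ball.mem_nhds hz)).hasDerivAt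
  have hderiv_meas : AEStronglyMeasurable (fun x ↦ deriv (F · x) z₀) μ := by
    refine aestronglyMeasurable_of_tendsto_ae (𝓝[≠] (0 : ℂ))
      (f := fun h x ↦ if z₀ + h ∈ ball z₀ r then h⁻¹ • (F (z₀ + h) x - F z₀ x) else 0)
      (fun h ↦ ?_) ?_
    · split_ifs with hh
      · exact ((hmeas _ hh).sub (hmeas _ hz₀)).const_smul h⁻¹
      · exact aestronglyMeasurable_const
    · filter_upwards [hderiv] with x hx
      refine (hx z₀ hz₀).tendsto_slope_zero.congr' ?_
      have hcont : Tendsto (fun h : ℂ ↦ z₀ + h) (𝓝[≠] 0) (𝓝 z₀) := by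
        simpa using ((continuous_const_add z₀).tendsto 0).mono_left nhdsWithin_le_nhds
      filter_upwards [hcont.eventually hball] with h hh
      rw [if_pos hh]
  -- Cauchy's estimate on circles of radius `r / 3` bounds the derivative by the function.
  have hderiv_le : ∀ᵐ x ∂μ, ∀ z ∈ ball z₀ (r / 3),
      ‖deriv (F · x) z‖ ≤ bound x / (r / 3) := by
    filter_upwards [hdiff, hbound] with x hx hbx z hz
    have hsub : closedBall z (r / 3) ⊆ ball z₀ r := fun w hw ↦ by
      rw [mem_ball] at hz ⊢; rw [mem_closedBall] at hw
      linarith [dist_triangle w z z₀]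
    exact norm_deriv_le_of_forall_mem_sphere_norm_le (by positivity) (hx.diffContOnCl_ball hsub)
      fun w hw ↦ hbx w (hsub (sphere_subset_closedBall hw))
  exact (hasDerivAt_integral_of_dominated_loc_of_deriv_le (ball_mem_nhds z₀ (by positivity))
    (hball.mono hmeas) (hint.mono' (hmeas z₀ hz₀) (hbound.mono fun x hx ↦ hx z₀ hz₀)) hderiv_meas
    hderiv_le (hint.div_const _)
    (hderiv.mono fun x hx z hz ↦
      hx z (ball_subset_ball (by linarith) hz))).2.differentiableAt

theorem ofReal_mul_cpow {r : ℝ} (hr : 0 < r) {x : ℂ} (a : ℂ) :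
    ((r : ℂ) * x) ^ a = (r : ℂ) ^ a * x ^ a := by
  obtain rfl | hx := eq_or_ne x 0
  · obtain rfl | ha := eq_or_ne a 0 <;> simp [*]
  have hr' : (r : ℂ) ≠ 0 := ofReal_ne_zero.2 hr.ne'
  rw [cpow_def_of_ne_zero (mul_ne_zero hr' hx), cpow_def_of_ne_zero hr', cpow_def_of_ne_zero hx,
    log_ofReal_mul hr hx, ofReal_log hr.le, add_mul, Complex.exp_add]

theorem isClosed_image_cpow {a : ℝ} (ha : 0 < a) {S : Set ℂ} (hS : IsClosed S)
    (hre : ∀ s ∈ S, 0 ≤ s.re) : IsClosed ((fun s : ℂ ↦ s ^ (a : ℂ)) '' S) := by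
  have hproper : IsProperMap (fun s : S ↦ (s : ℂ) ^ (a : ℂ)) := by
    refine isProperMap_iff_tendsto_cocompact.2 ⟨?_, ?_⟩
    · refine continuous_iff_continuousAt.2 fun s ↦ ContinuousAt.comp (f := Subtype.val)
        (continuousAt_cpow_const_of_re_pos (.inl (hre s s.2)) (by simpa)) (by fun_prop)
    · rw [← Metric.cobounded_eq_cocompact (α := ℂ), ← tendsto_norm_atTop_iff_cobounded]
      simp only [norm_cpow_real]
      exact (tendsto_rpow_atTop ha).comp
        ((tendsto_norm_cocompact_atTop (E := ℂ)).comp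
          hS.isClosedEmbedding_subtypeVal.tendsto_cocompact)
  rw [image_eq_range]
  exact hproper.isClosedMap.isClosed_range

/-! ### The Laplace transform of the Mittag-Leffler function -/

theorem rpow_mul_exp_neg_le_Gamma_add_one {x R : ℝ} (hx : 0 ≤ x) (hR : 0 < R) :
    R ^ x * Real.exp (-R) ≤ Real.Gamma (x + 1) := by
  have hint : IntegrableOn (fun t : ℝ ↦ Real.exp (-t) * t ^ x) (Ioi 0) := by
    simpa using Real.GammaIntegral_convergent (s := x + 1) (by linarith)
  calc R ^ x * Real.exp (-R) = ∫ t in Ioi R, Real.exp (-t) * R ^ x := by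
        rw [integral_mul_const, integral_exp_neg_Ioi, mul_comm]
    _ ≤ ∫ t in Ioi R, Real.exp (-t) * t ^ x := by
        refine setIntegral_mono_on ((integrableOn_exp_neg_Ioi R).mul_const _)
          (hint.mono_set (Ioi_subset_Ioi hR.le)) measurableSet_Ioi fun t ht ↦ ?_
        gcongr
        exact ht.le
    _ ≤ ∫ t in Ioi (0 : ℝ), Real.exp (-t) * t ^ x := by
        refine setIntegral_mono_set hint ?_ (Ioi_subset_Ioi hR.le).eventuallyLE
        filter_upwards [ae_restrict_mem measurableSet_Ioi] with t ht
        exact mul_nonneg (Real.exp_nonneg _) (Real.rpow_nonneg (le_of_lt ht) _)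
    _ = Real.Gamma (x + 1) := by simp [Real.Gamma_eq_integral (by linarith : 0 < x + 1)]

theorem Gamma_mul_natCast_add_one (lam : ℝ) (n : ℕ) :
    Complex.Gamma (lam * n + 1) = (Real.Gamma (lam * n + 1) : ℂ) := by
  rw [← Complex.Gamma_ofReal]; push_cast; rfl

theorem norm_pow_div_Gamma_le {lam : ℝ} (hlam : 0 < lam) {R : ℝ} (hR : 0 < R) (z : ℂ) (n : ℕ) :
    ‖z ^ n / Complex.Gamma (lam * n + 1)‖ ≤ Real.exp R * (‖z‖ / R ^ lam) ^ n := by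
  have hGamma : 0 < Real.Gamma (lam * n + 1) := Real.Gamma_pos_of_pos (by positivity)
  rw [Gamma_mul_natCast_add_one, norm_div, norm_pow, norm_real, Real.norm_of_nonneg hGamma.le]
  calc ‖z‖ ^ n / Real.Gamma (lam * n + 1) ≤ ‖z‖ ^ n / (R ^ (lam * n) * Real.exp (-R)) := by
        gcongr
        exact rpow_mul_exp_neg_le_Gamma_add_one (by positivity) hR
    _ = Real.exp R * (‖z‖ / R ^ lam) ^ n := by
        rw [Real.rpow_mul hR.le, Real.rpow_natCast, Real.exp_neg, div_pow]
        field_simp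

theorem differentiable_mlE {lam : ℝ} (hlam : 0 < lam) : Differentiable ℂ (mlE lam) := by
  intro z
  obtain ⟨R, hR, hRlam⟩ : ∃ R : ℝ, 0 < R ∧ R ^ lam = 2 * (‖z‖ + 1) :=
    ⟨_, by positivity, Real.rpow_inv_rpow (by positivity) hlam.ne'⟩
  have hd : DifferentiableOn ℂ (mlE lam) (Metric.ball 0 (‖z‖ + 1)) := by
    refine differentiableOn_tsum_of_summable_norm (u := fun n ↦ Real.exp R * (1 / 2) ^ n)
      (summable_geometric_two.mul_left _) (fun n ↦ by fun_prop) Metric.isOpen_ball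
      fun n w hw ↦ (norm_pow_div_Gamma_le hlam hR w n).trans ?_
    have hw' : ‖w‖ < ‖z‖ + 1 := mem_ball_zero_iff.1 hw
    have : ‖w‖ / R ^ lam ≤ 1 / 2 := by
      rw [hRlam, div_le_iff₀ (by positivity)]; linarith
    gcongr
  exact hd.differentiableAt (Metric.isOpen_ball.mem_nhds (by simp))

theorem mlE_zero (lam : ℝ) : mlE lam 0 = 1 := by
  rw [mlE, tsum_eq_single 0 fun n hn ↦ by simp [hn]]
  simp

theorem continuous_mlE_mul_rpow {lam : ℝ} (hlam : 0 < lam) (c : ℂ) :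
    Continuous fun u : ℝ ↦ mlE lam (c * (u ^ lam : ℝ)) := by
  have hE := (differentiable_mlE hlam).continuous
  have hpow : Continuous fun u : ℝ ↦ u ^ lam := Real.continuous_rpow_const hlam.le
  fun_prop

theorem integral_rpow_mul_exp_neg {lam s : ℝ} (hlam : 0 ≤ lam) (hs : 0 < s) (n : ℕ) :
    ∫ u in Ioi (0 : ℝ), u ^ (lam * n) * Real.exp (-(s * u)) =
      Real.Gamma (lam * n + 1) * (s⁻¹ * ((s ^ lam)⁻¹) ^ n) := by
  have := Real.integral_rpow_mul_exp_neg_mul_Ioi (a := lam * n + 1) (by positivity) hs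
  simp only [add_sub_cancel_right] at this
  rw [this, one_div, Real.rpow_add (by positivity), Real.rpow_one, Real.rpow_mul (by positivity),
    Real.rpow_natCast, Real.inv_rpow hs.le]
  ring

theorem integrableOn_rpow_mul_exp_neg {lam s : ℝ} (hlam : 0 ≤ lam) (hs : 0 < s) (n : ℕ) :
    IntegrableOn (fun u : ℝ ↦ u ^ (lam * n) * Real.exp (-(s * u))) (Ioi 0) := by
  refine Integrable.of_integral_ne_zero (f := fun u : ℝ ↦ u ^ (lam * n) * Real.exp (-(s * u))) ?_
  rw [integral_rpow_mul_exp_neg hlam hs]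
  have := Real.Gamma_pos_of_pos (s := lam * n + 1) (by positivity)
  positivity

theorem hasSum_laplace_mlE {lam s : ℝ} (hlam : 0 ≤ lam) (hs : 0 < s) {c : ℂ}
    (hc : ‖c‖ < s ^ lam) :
    HasSum (fun n : ℕ ↦ (s : ℂ)⁻¹ * (c * ((s ^ lam : ℝ) : ℂ)⁻¹) ^ n)
      (∫ u in Ioi (0 : ℝ), Complex.exp (-(s * u)) * mlE lam (c * (u ^ lam : ℝ))) := by
  have hGamma (n : ℕ) : 0 < Real.Gamma (lam * n + 1) := Real.Gamma_pos_of_pos (by positivity)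
  let F (n : ℕ) (u : ℝ) : ℂ := c ^ n / Real.Gamma (lam * n + 1) *
    (u ^ (lam * n) * Real.exp (-(s * u)) : ℝ)
  have hF_int (n : ℕ) : Integrable (F n) (volume.restrict (Ioi 0)) :=
    (integrableOn_rpow_mul_exp_neg hlam hs n).ofReal.const_mul _
  have hF_integral (n : ℕ) :
      ∫ u in Ioi (0 : ℝ), F n u = (s : ℂ)⁻¹ * (c * ((s ^ lam : ℝ) : ℂ)⁻¹) ^ n := by
    have : (Real.Gamma (lam * n + 1) : ℂ) ≠ 0 := ofReal_ne_zero.2 (hGamma n).ne'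
    rw [integral_const_mul, integral_complex_ofReal, integral_rpow_mul_exp_neg hlam hs]
    push_cast
    rw [mul_pow]
    field_simp
  have hF_norm (n : ℕ) : ∫ u in Ioi (0 : ℝ), ‖F n u‖ = s⁻¹ * (‖c‖ * (s ^ lam)⁻¹) ^ n := by
    have hnorm : EqOn (fun u ↦ ‖F n u‖) (fun u ↦ ‖c‖ ^ n / Real.Gamma (lam * n + 1) *
        (u ^ (lam * n) * Real.exp (-(s * u)))) (Ioi 0) := fun u hu ↦ by
      have hu' : 0 < u := hu
      simp only [F, norm_mul, norm_div, norm_pow, norm_real, Real.norm_of_nonneg (hGamma n).le]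
      simp [abs_of_pos (Real.rpow_pos_of_pos hu' _)]
    rw [setIntegral_congr_fun measurableSet_Ioi hnorm, integral_const_mul,
      integral_rpow_mul_exp_neg hlam hs, mul_pow]
    have := (hGamma n).ne'
    field_simp
  have hF_tsum : EqOn (fun u : ℝ ↦ Complex.exp (-(s * u)) * mlE lam (c * (u ^ lam : ℝ)))
      (fun u ↦ ∑' n, F n u) (Ioi 0) := fun u hu ↦ by
    simp only [mlE, F, Gamma_mul_natCast_add_one, ← tsum_mul_left]
    refine tsum_congr fun n ↦ ?_
    rw [Real.rpow_mul (le_of_lt hu), Real.rpow_natCast]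
    push_cast
    ring
  have hratio : ‖c‖ * (s ^ lam)⁻¹ < 1 := by
    rwa [← div_eq_mul_inv, div_lt_one (by positivity)]
  rw [setIntegral_congr_fun measurableSet_Ioi hF_tsum]
  simpa only [hF_integral] using hasSum_integral_of_summable_integral_norm hF_int (by
    simpa only [hF_norm] using
      (summable_geometric_of_lt_one (by positivity) hratio).mul_left s⁻¹)

theorem laplace_mlE_mul {lam s : ℝ} (hlam : 0 ≤ lam) (hs : 0 < s) {c : ℂ}
    (hc : ‖c‖ < s ^ lam) :
    (∫ u in Ioi (0 : ℝ), Complex.exp (-(s * u)) * mlE lam (c * (u ^ lam : ℝ))) *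
      ((s : ℂ) ^ (lam : ℂ) - c) = (s : ℂ) ^ ((lam : ℂ) - 1) := by
  have hpow : ((s ^ lam : ℝ) : ℂ) ≠ 0 := ofReal_ne_zero.2 (by positivity)
  have hratio : ‖c * ((s ^ lam : ℝ) : ℂ)⁻¹‖ < 1 := by
    rwa [norm_mul, norm_inv, norm_real, Real.norm_of_nonneg (by positivity), ← div_eq_mul_inv,
      div_lt_one (by positivity)]
  have hne : 1 - c * ((s ^ lam : ℝ) : ℂ)⁻¹ ≠ 0 := fun h ↦ by
    simp [← sub_eq_zero.1 h] at hratio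
  have hfactor : ((s ^ lam : ℝ) : ℂ) - c =
      (s ^ lam : ℝ) * (1 - c * ((s ^ lam : ℝ) : ℂ)⁻¹) := by field_simp
  rw [(hasSum_laplace_mlE hlam hs hc).unique
      ((hasSum_geometric_of_norm_lt_one hratio).mul_left _),
    cpow_sub _ _ (ofReal_ne_zero.2 hs.ne'), ← ofReal_cpow hs.le, cpow_one, hfactor]
  generalize 1 - c * ((s ^ lam : ℝ) : ℂ)⁻¹ = d at hne
  field_simp

theorem differentiableOn_laplace {g : ℝ → ℂ} {a : ℝ}
    (hint : ∀ x : ℝ, a < x → IntegrableOn (fun u : ℝ ↦ Complex.exp (-(x * u)) * g u) (Ioi 0)) :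
    DifferentiableOn ℂ (fun s : ℂ ↦ ∫ u in Ioi (0 : ℝ), Complex.exp (-(s * u)) * g u)
      {s | a < s.re} := by
  intro s (hs : a < s.re)
  obtain ⟨x, hax, hxs⟩ := exists_between hs
  refine (differentiableAt_integral_of_norm_le (r := s.re - x) (by linarith)
    (F := fun s (u : ℝ) ↦ Complex.exp (-(s * u)) * g u)
    (bound := fun u ↦ ‖Complex.exp (-(x * u)) * g u‖) (fun z _ ↦ ?_)
    (ae_of_all _ fun u ↦ by fun_prop) ?_ (hint x hax).norm).differentiableWithinAt
  · have hfactor (u : ℝ) : Complex.exp (-(z * u)) * g u =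
        Complex.exp ((x - z) * u) * (Complex.exp (-(x * u)) * g u) := by
      rw [← mul_assoc, ← Complex.exp_add]; ring_nf
    simp only [hfactor]
    exact (Continuous.aestronglyMeasurable (by fun_prop)).mul (hint x hax).1
  · filter_upwards [ae_restrict_mem measurableSet_Ioi] with u (hu : 0 < u) z hz
    have hxz : x < z.re := by
      have := (abs_re_le_norm (z - s)).trans_lt (mem_ball_iff_norm.1 hz)
      rw [abs_lt, sub_re] at this
      linarith
    rw [norm_mul, norm_mul, Complex.norm_exp, Complex.norm_exp]
    simp only [neg_re, mul_re, ofReal_re, ofReal_im, mul_zero, sub_zero]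
    gcongr

theorem eqOn_re_pos_of_eqOn_Ioi {f g : ℂ → ℂ} {R : ℝ} (hR : 0 < R)
    (hf : DifferentiableOn ℂ f {s | 0 < s.re}) (hg : DifferentiableOn ℂ g {s | 0 < s.re})
    (h : ∀ x : ℝ, R < x → f x = g x) : EqOn f g {s | 0 < s.re} := by
  have hopen : IsOpen {s : ℂ | 0 < s.re} := isOpen_lt continuous_const continuous_re
  have htendsto : Tendsto (fun x : ℝ ↦ (x : ℂ)) (𝓝[>] R) (𝓝[≠] (R : ℂ)) :=
    tendsto_nhdsWithin_iff.2 ⟨(continuous_ofReal.tendsto R).mono_left nhdsWithin_le_nhds,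
      eventually_mem_nhdsWithin.mono fun x hx ↦ by simpa using (ne_of_gt hx)⟩
  exact (hf.analyticOnNhd hopen).eqOn_of_preconnected_of_frequently_eq (hg.analyticOnNhd hopen)
    (convex_halfSpace_re_gt 0).isPreconnected (z₀ := (R : ℂ)) (by simpa)
    (htendsto.frequently (Eventually.frequently (f := 𝓝[>] R) (eventually_mem_nhdsWithin.mono h)))

theorem differentiableOn_cpow_const_re_pos (a : ℂ) :
    DifferentiableOn ℂ (fun s : ℂ ↦ s ^ a) {s | 0 < s.re} := fun _ hs ↦
  (differentiableAt_id.cpow_const (.inl hs)).differentiableWithinAt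

theorem laplace_mlE_mul_of_integrableOn {lam : ℝ} (hlam : 0 < lam) {c : ℂ}
    (hint : ∀ x : ℝ, 0 < x → IntegrableOn
      (fun u : ℝ ↦ Complex.exp (-(x * u)) * mlE lam (c * (u ^ lam : ℝ))) (Ioi 0))
    {s : ℂ} (hs : 0 < s.re) :
    (∫ u in Ioi (0 : ℝ), Complex.exp (-(s * u)) * mlE lam (c * (u ^ lam : ℝ))) *
      (s ^ (lam : ℂ) - c) = s ^ ((lam : ℂ) - 1) := by
  obtain ⟨R, hR, hRlam⟩ : ∃ R : ℝ, 0 < R ∧ R ^ lam = ‖c‖ + 1 :=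
    ⟨_, by positivity, Real.rpow_inv_rpow (by positivity) hlam.ne'⟩
  refine eqOn_re_pos_of_eqOn_Ioi hR
    ((differentiableOn_laplace hint).mul ((differentiableOn_cpow_const_re_pos lam).sub_const c))
    (differentiableOn_cpow_const_re_pos (lam - 1)) (fun x hx ↦ ?_) hs
  refine laplace_mlE_mul hlam.le (hR.trans hx) ?_
  linarith [Real.rpow_lt_rpow hR.le hx hlam]

theorem not_integrableAtFilter_rpow_mul_mlE {lam : ℝ} (hlam : 0 < lam) {s : ℂ} (hs : 0 < s.re)
    (M : ℝ) : ¬ IntegrableAtFilter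
      (fun u : ℝ ↦ (u : ℂ) ^ (M : ℂ) * mlE lam (s ^ (lam : ℂ) * (u ^ lam : ℝ))) atTop := by
  intro hM
  have hdom (x : ℝ) (hx : 0 < x) :
      (fun u : ℝ ↦ Complex.exp (-(x * u)) * mlE lam (s ^ (lam : ℂ) * (u ^ lam : ℝ))) =O[atTop]
        fun u : ℝ ↦ (u : ℂ) ^ (M : ℂ) * mlE lam (s ^ (lam : ℂ) * (u ^ lam : ℝ)) := by
    refine Asymptotics.IsBigO.mul (Asymptotics.IsBigO.of_norm_norm ?_)
      (Asymptotics.isBigO_refl _ _)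
    refine (isLittleO_exp_neg_mul_rpow_atTop hx M).isBigO.congr' ?_ ?_
    · simp [Complex.norm_exp]
    · filter_upwards [eventually_gt_atTop 0] with u hu
      rw [norm_cpow_real, norm_real, Real.norm_of_nonneg hu.le]
  have hint (x : ℝ) (hx : 0 < x) : IntegrableOn
      (fun u : ℝ ↦ Complex.exp (-(x * u)) * mlE lam (s ^ (lam : ℂ) * (u ^ lam : ℝ))) (Ioi 0) := by
    have hcont : Continuous
        fun u : ℝ ↦ Complex.exp (-(x * u)) * mlE lam (s ^ (lam : ℂ) * (u ^ lam : ℝ)) :=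
      (by fun_prop : Continuous fun u : ℝ ↦ Complex.exp (-(x * u))).mul
        (continuous_mlE_mul_rpow hlam _)
    exact (((hcont.locallyIntegrable (μ := volume)).locallyIntegrableOn
      _).integrableOn_of_isBigO_atTop (hdom x hx) hM).mono_set Ioi_subset_Ici_self
  have hzero := laplace_mlE_mul_of_integrableOn hlam hint hs
  rw [sub_self, mul_zero, eq_comm, cpow_eq_zero_iff] at hzero
  simp [hzero.1] at hs

/-! ### The Hankel representation -/

theorem laplace_inversion {g : ℝ → ℂ} {b u : ℝ} (hu : 0 < u) (hgu : ContinuousAt g u)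
    (hg : IntegrableOn (fun t : ℝ ↦ Complex.exp (-(b * t)) * g t) (Ioi 0))
    {L : ℝ → ℂ} (hL : ∀ w : ℝ, ∫ t in Ioi (0 : ℝ), Complex.exp (-((b + w * I) * t)) * g t = L w)
    (hL_int : Integrable L) :
    ∫ w : ℝ, Complex.exp ((b + w * I) * u) * L w = 2 * π * g u := by
  let f : ℝ → ℂ := (Ioi 0).indicator fun t ↦ Complex.exp (-(b * t)) * g t
  have hfourier (ξ : ℝ) : FourierTransform.fourier f ξ = L (2 * π * ξ) := by
    rw [Real.fourier_eq', ← hL, ← integral_indicator measurableSet_Ioi]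
    refine integral_congr_ae (ae_of_all _ fun t ↦ ?_)
    by_cases ht : t ∈ Ioi 0
    · simp only [f, indicator_of_mem ht, smul_eq_mul, RCLike.inner_apply, conj_trivial]
      rw [← mul_assoc, ← Complex.exp_add]
      push_cast
      ring_nf
    · simp [f, indicator_of_notMem ht]
  have hf_eq : f =ᶠ[𝓝 u] fun t ↦ Complex.exp (-(b * t)) * g t :=
    eventually_of_mem (Ioi_mem_nhds hu) fun t ht ↦ indicator_of_mem ht _
  have hf_cont : ContinuousAt f u :=
    (continuousAt_congr hf_eq).2 (ContinuousAt.mul (by fun_prop) hgu)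
  have hf_int : Integrable f := (integrable_indicator_iff measurableSet_Ioi).2 hg
  have hinv := hf_int.fourierInv_fourier_eq
    ((hL_int.comp_mul_left' (R := 2 * π) (by positivity)).congr
      (ae_of_all _ fun ξ ↦ (hfourier ξ).symm)) hf_cont
  have hscale := Measure.integral_comp_mul_left
    (fun w : ℝ ↦ Complex.exp ((b + w * I) * u) * L w) (2 * π)
  rw [Real.fourierInv_eq', hf_eq.eq_of_nhds] at hinv
  have hexp (ξ : ℝ) : Complex.exp ((b + (2 * π * ξ : ℝ) * I) * u) * L (2 * π * ξ) =
      Complex.exp (b * u) * (Complex.exp ((2 * π * inner ℝ ξ u : ℝ) * I) •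
        FourierTransform.fourier f ξ) := by
    rw [hfourier, smul_eq_mul, ← mul_assoc, ← Complex.exp_add, RCLike.inner_apply, conj_trivial]
    push_cast
    ring_nf
  simp only [hexp] at hscale
  rw [integral_const_mul, hinv, ← mul_assoc, ← Complex.exp_add, add_neg_cancel, Complex.exp_zero,
    one_mul, real_smul, abs_of_pos (by positivity)] at hscale
  rw [hscale, ← mul_assoc, ofReal_inv, ofReal_mul, ofReal_ofNat, mul_inv_cancel₀ (by simp), one_mul]

theorem laplace_cpow_ofReal {x r : ℝ} (hx : -1 < x) (hr : 0 < r) :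
    ∫ t in Ioi (0 : ℝ), Complex.exp (-(r * t)) * (t : ℂ) ^ (x : ℂ) =
      Complex.Gamma (x + 1) * (r : ℂ) ^ (-(x + 1) : ℂ) := by
  have := integral_cpow_mul_exp_neg_mul_Ioi (a := x + 1) (by simpa [← neg_lt_iff_pos_add]) hr
  simp only [add_sub_cancel_right] at this
  simp only [mul_comm (Complex.exp _), this]
  rw [one_div, inv_cpow, cpow_neg, mul_comm]
  simp [arg_ofReal_of_nonneg hr.le, Real.pi_ne_zero.symm]

theorem integrableOn_exp_neg_mul_cpow {x r : ℝ} (hx : -1 < x) (hr : 0 < r) :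
    IntegrableOn (fun t : ℝ ↦ Complex.exp (-(r * t)) * (t : ℂ) ^ (x : ℂ)) (Ioi 0) := by
  refine Integrable.of_integral_ne_zero
    (f := fun t : ℝ ↦ Complex.exp (-(r * t)) * (t : ℂ) ^ (x : ℂ)) ?_
  rw [laplace_cpow_ofReal hx hr]
  exact mul_ne_zero (Gamma_ne_zero_of_re_pos (by simpa [← neg_lt_iff_pos_add]))
    (by simp [cpow_eq_zero_iff, hr.ne'])

theorem laplace_cpow {x : ℝ} (hx : -1 < x) {s : ℂ} (hs : 0 < s.re) :
    ∫ t in Ioi (0 : ℝ), Complex.exp (-(s * t)) * (t : ℂ) ^ (x : ℂ) =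
      Complex.Gamma (x + 1) * s ^ (-(x + 1) : ℂ) :=
  eqOn_re_pos_of_eqOn_Ioi one_pos
    (differentiableOn_laplace fun _ hr ↦ integrableOn_exp_neg_mul_cpow hx hr)
    ((differentiableOn_cpow_const_re_pos _).const_mul _)
    (fun _ hr ↦ laplace_cpow_ofReal hx (one_pos.trans hr)) hs

/-- The point of height `w` on the line `Re s = 1`, which serves as Hankel contour. -/
noncomputable def hankelLine (w : ℝ) : ℂ := 1 + w * I

theorem hankelLine_re (w : ℝ) : (hankelLine w).re = 1 := by simp [hankelLine]

theorem one_le_norm_hankelLine (w : ℝ) : 1 ≤ ‖hankelLine w‖ :=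
  (hankelLine_re w).symm.le.trans (re_le_norm _)

theorem hankelLine_ne_zero (w : ℝ) : hankelLine w ≠ 0 :=
  norm_pos_iff.1 (one_pos.trans_le (one_le_norm_hankelLine w))

theorem norm_exp_hankelLine (w : ℝ) : ‖Complex.exp (hankelLine w)‖ = Real.exp 1 := by
  rw [Complex.norm_exp, hankelLine_re]

@[fun_prop]
theorem continuous_hankelLine : Continuous hankelLine := by
  unfold hankelLine; fun_prop

theorem continuous_hankelLine_cpow (a : ℂ) : Continuous fun w ↦ hankelLine w ^ a :=
  continuous_hankelLine.cpow continuous_const fun w ↦ .inl (by simp [hankelLine_re])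

theorem integrable_norm_hankelLine_rpow {r : ℝ} (hr : 1 < r) :
    Integrable fun w ↦ ‖hankelLine w‖ ^ (-r) := by
  have hnorm (w : ℝ) : ‖hankelLine w‖ ^ (-r) = (1 + ‖w‖ ^ 2) ^ (-r / 2) := by
    have : ‖hankelLine w‖ = √(1 + ‖w‖ ^ 2) := by
      rw [hankelLine, ← ofReal_one, norm_add_mul_I, one_pow, Real.norm_eq_abs, sq_abs]
    rw [this, Real.sqrt_eq_rpow, ← Real.rpow_mul (by positivity)]
    ring_nf
  simpa only [hnorm] using integrable_rpow_neg_one_add_norm_sq (E := ℝ) (by simpa)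

theorem hankel_inv_Gamma {x : ℝ} (hx : 0 < x) :
    ∫ w, Complex.exp (hankelLine w) * hankelLine w ^ (-(x + 1) : ℂ) =
      2 * π * (Complex.Gamma (x + 1))⁻¹ := by
  have hx' : -1 < x := by linarith
  have hGamma : Complex.Gamma (x + 1) ≠ 0 := Gamma_ne_zero_of_re_pos (by simp; linarith)
  have hL (w : ℝ) : ∫ t in Ioi (0 : ℝ), Complex.exp (-(((1 : ℝ) + w * I) * t)) *
      (t : ℂ) ^ (x : ℂ) = Complex.Gamma (x + 1) * hankelLine w ^ (-(x + 1) : ℂ) := by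
    rw [hankelLine, ← laplace_cpow hx' (by simp), ofReal_one]
  have hL_int : Integrable fun w ↦ Complex.Gamma (x + 1) * hankelLine w ^ (-(x + 1) : ℂ) := by
    refine Integrable.const_mul ((integrable_norm_hankelLine_rpow (r := x + 1) (by linarith)).mono'
      (continuous_hankelLine_cpow _).aestronglyMeasurable (ae_of_all _ fun w ↦ ?_)) _
    rw [← norm_cpow_real]; push_cast; rfl
  have hinv := laplace_inversion one_pos
    (continuousAt_ofReal_cpow_const 1 (x : ℂ) (.inr one_ne_zero))
    (integrableOn_exp_neg_mul_cpow hx' one_pos) hL hL_int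
  simp only [ofReal_one, mul_one, one_cpow, mul_left_comm _ (Complex.Gamma (x + 1)),
    integral_const_mul] at hinv
  rw [eq_mul_inv_iff_mul_eq₀ hGamma, mul_comm]
  exact hinv

/-- The integrand of the Hankel-type representation of `mlE lam z - 1`. -/
noncomputable def hankelKernel (lam : ℝ) (z : ℂ) (w : ℝ) : ℂ :=
  Complex.exp (hankelLine w) * (z / (hankelLine w * (hankelLine w ^ (lam : ℂ) - z)))

theorem continuous_hankelKernel {lam : ℝ} {z : ℂ} (hz : ∀ s : ℂ, 1 ≤ s.re → s ^ (lam : ℂ) ≠ z) :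
    Continuous (hankelKernel lam z) := by
  have := continuous_hankelLine_cpow lam
  refine Continuous.mul (by fun_prop) (continuous_const.div (by fun_prop) fun w ↦ ?_)
  exact mul_ne_zero (hankelLine_ne_zero w) (sub_ne_zero.2 (hz _ (hankelLine_re w).ge))

theorem hasSum_hankelKernel {lam : ℝ} (hlam : 0 ≤ lam) {z : ℂ} (hz : ‖z‖ < 1) (w : ℝ) :
    HasSum (fun n : ℕ ↦ z ^ (n + 1) * (Complex.exp (hankelLine w) *
      hankelLine w ^ (-((lam * (n + 1 : ℕ) : ℝ) + 1) : ℂ))) (hankelKernel lam z w) := by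
  have hs := hankelLine_ne_zero w
  have hpow : hankelLine w ^ (lam : ℂ) ≠ 0 := by simp [cpow_eq_zero_iff, hs]
  have hlt : ‖z / hankelLine w ^ (lam : ℂ)‖ < 1 := by
    rw [norm_div, norm_cpow_real, div_lt_one (by positivity)]
    exact hz.trans_le (Real.one_le_rpow (one_le_norm_hankelLine w) hlam)
  have hne : 1 - z / hankelLine w ^ (lam : ℂ) ≠ 0 := fun h ↦ by simp [← sub_eq_zero.1 h] at hlt
  have hterm (n : ℕ) : z ^ (n + 1) * (Complex.exp (hankelLine w) *
      hankelLine w ^ (-((lam * (n + 1 : ℕ) : ℝ) + 1) : ℂ)) =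
      Complex.exp (hankelLine w) * z / (hankelLine w * hankelLine w ^ (lam : ℂ)) *
        (z / hankelLine w ^ (lam : ℂ)) ^ n := by
    rw [cpow_neg, cpow_add _ _ hs, cpow_one, ofReal_mul, ofReal_natCast, cpow_mul_nat, div_pow]
    field_simp
    ring
  have hlimit : hankelKernel lam z w =
      Complex.exp (hankelLine w) * z / (hankelLine w * hankelLine w ^ (lam : ℂ)) *
        (1 - z / hankelLine w ^ (lam : ℂ))⁻¹ := by
    have hfactor : hankelLine w ^ (lam : ℂ) - z =
      hankelLine w ^ (lam : ℂ) * (1 - z / hankelLine w ^ (lam : ℂ)) := by field_simp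
    rw [hankelKernel, hfactor]
    generalize 1 - z / hankelLine w ^ (lam : ℂ) = d at hne
    field_simp
  simpa only [hlimit, hterm] using (hasSum_geometric_of_norm_lt_one hlt).mul_left _

theorem mlE_eq_hankel_of_norm_lt_one {lam : ℝ} (hlam : 0 < lam) {z : ℂ} (hz : ‖z‖ < 1) :
    mlE lam z = 1 + (2 * π : ℂ)⁻¹ * ∫ w, hankelKernel lam z w := by
  let F (n : ℕ) (w : ℝ) : ℂ := z ^ (n + 1) * (Complex.exp (hankelLine w) *
    hankelLine w ^ (-((lam * (n + 1 : ℕ) : ℝ) + 1) : ℂ))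
  have hF_integral (n : ℕ) : ∫ w, F n w =
      2 * π * (z ^ (n + 1) / Complex.Gamma (lam * (n + 1 : ℕ) + 1)) := by
    rw [integral_const_mul, hankel_inv_Gamma (by positivity)]
    push_cast
    ring
  have hF_le (n : ℕ) (w : ℝ) :
      ‖F n w‖ ≤ ‖z‖ ^ (n + 1) * (Real.exp 1 * ‖hankelLine w‖ ^ (-(lam + 1))) := by
    have hcast : (-((lam * (n + 1 : ℕ) : ℝ) + 1) : ℂ) = (-(lam * (n + 1) + 1) : ℝ) := by
      push_cast; rfl
    rw [norm_mul, norm_pow, norm_mul, norm_exp_hankelLine, hcast, norm_cpow_real]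
    gcongr
    · exact one_le_norm_hankelLine w
    · nlinarith [n.cast_nonneg (α := ℝ)]
  have hsummable : Summable fun n : ℕ ↦ ‖z‖ ^ (n + 1) :=
    (summable_nat_add_iff 1).2 (summable_geometric_of_lt_one (norm_nonneg z) hz)
  have hsum : HasSum (fun n ↦ ∫ w, F n w) (∫ w, hankelKernel lam z w) := by
    refine hasSum_integral_of_dominated_convergence _ (fun n ↦ ?_) (fun n ↦ ae_of_all _ (hF_le n))
      (ae_of_all _ fun w ↦ hsummable.mul_right _) ?_
      (ae_of_all _ (hasSum_hankelKernel hlam.le hz))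
    · have := continuous_hankelLine_cpow (-((lam * (n + 1 : ℕ) : ℝ) + 1) : ℂ)
      exact Continuous.aestronglyMeasurable (by fun_prop)
    · simp only [tsum_mul_right]
      exact ((integrable_norm_hankelLine_rpow (by linarith)).const_mul _).const_mul _
  simp only [hF_integral] at hsum
  have hseries := hsum.mul_left (2 * π : ℂ)⁻¹
  simp only [inv_mul_cancel_left₀ (by simp [Real.pi_ne_zero] : (2 * π : ℂ) ≠ 0)] at hseries
  simpa [mlE] using
    (hseries.zero_add (f := fun n : ℕ ↦ z ^ n / Complex.Gamma (lam * n + 1))).tsum_eq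

theorem norm_hankelKernel (lam : ℝ) (z : ℂ) (w : ℝ) :
    ‖hankelKernel lam z w‖ =
      Real.exp 1 * (‖z‖ / (‖hankelLine w‖ * ‖hankelLine w ^ (lam : ℂ) - z‖)) := by
  rw [hankelKernel, norm_mul, norm_exp_hankelLine, norm_div, norm_mul]

theorem norm_hankelLine_pos (w : ℝ) : 0 < ‖hankelLine w‖ := norm_pos_iff.2 (hankelLine_ne_zero w)

theorem norm_div_norm_sub_le {E : Type*} [NormedAddCommGroup E] {x z : E} (h : x ≠ z) :
    ‖x‖ / ‖x - z‖ ≤ 1 + ‖z‖ / ‖x - z‖ := by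
  have := norm_pos_iff.2 (sub_ne_zero.2 h)
  rw [one_add_div this.ne']
  gcongr
  linarith [norm_le_norm_add_norm_sub z x, norm_sub_rev z x]

theorem mul_cpow_ne_of_forall_re_pos {lam u : ℝ} (hu : 0 < u) {c : ℂ}
    (hc : ∀ ζ : ℂ, 0 < ζ.re → ζ ^ (lam : ℂ) ≠ c) {s : ℂ} (hs : 0 < s.re) :
    s ^ (lam : ℂ) ≠ c * (u ^ lam : ℝ) := by
  have hscale : s = (u : ℂ) * ((u⁻¹ : ℝ) * s) := by
    rw [← mul_assoc, ← ofReal_mul, mul_inv_cancel₀ hu.ne', ofReal_one, one_mul]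
  rw [hscale, ofReal_mul_cpow hu, ← ofReal_cpow hu.le, mul_comm c]
  refine fun h ↦ hc _ ?_ (mul_left_cancel₀ (ofReal_ne_zero.2 (by positivity)) h)
  rw [re_ofReal_mul]
  positivity

theorem starConvex_compl_image_cpow {lam : ℝ} (hlam : 0 < lam) :
    StarConvex ℝ 0 ((fun s : ℂ ↦ s ^ (lam : ℂ)) '' {s | 1 ≤ s.re})ᶜ := by
  refine starConvex_zero_iff.2 fun z hz t ht₀ ht₁ ↦ ?_
  rintro ⟨s, hs : 1 ≤ s.re, hst : s ^ (lam : ℂ) = t • z⟩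
  have hs₀ : s ≠ 0 := by rintro rfl; norm_num at hs
  obtain rfl | ht : t = 0 ∨ 0 < t := ht₀.eq_or_lt.imp_left Eq.symm
  · simp [cpow_eq_zero_iff, hs₀] at hst
  refine hz ⟨(t ^ (-lam⁻¹) : ℝ) * s, ?_, ?_⟩
  · have : 1 ≤ t ^ (-lam⁻¹) :=
      Real.one_le_rpow_of_pos_of_le_one_of_nonpos ht ht₁ (by simp [hlam.le])
    simpa using one_le_mul_of_one_le_of_one_le this hs
  · dsimp only
    rw [ofReal_mul_cpow (by positivity), ← ofReal_cpow (by positivity), ← Real.rpow_mul ht.le,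
      neg_mul, inv_mul_cancel₀ hlam.ne', Real.rpow_neg_one, hst, real_smul, ← mul_assoc,
      ← ofReal_mul, inv_mul_cancel₀ ht.ne', ofReal_one, one_mul]

theorem isOpen_compl_image_cpow {lam : ℝ} (hlam : 0 < lam) :
    IsOpen ((fun s : ℂ ↦ s ^ (lam : ℂ)) '' {s | 1 ≤ s.re})ᶜ :=
  (isClosed_image_cpow hlam (isClosed_le continuous_const continuous_re)
    fun _ hs ↦ zero_le_one.trans hs).isOpen_compl

theorem norm_hankelKernel_le_of_le_norm_sub {lam δ M : ℝ} {z : ℂ} {w : ℝ} (hδ : 0 < δ)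
    (hz : ‖z‖ ≤ M) (hdist : δ ≤ ‖hankelLine w ^ (lam : ℂ) - z‖) :
    ‖hankelKernel lam z w‖ ≤
      Real.exp 1 * (M * (1 + M / δ)) * ‖hankelLine w‖ ^ (-(lam + 1)) := by
  have hpos := norm_hankelLine_pos w
  have hsub : 0 < ‖hankelLine w ^ (lam : ℂ) - z‖ := hδ.trans_le hdist
  have hM : 0 ≤ M := (norm_nonneg z).trans hz
  have hratio : ‖hankelLine w‖ ^ lam / ‖hankelLine w ^ (lam : ℂ) - z‖ ≤ 1 + M / δ := by
    refine (norm_cpow_real _ lam ▸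
      norm_div_norm_sub_le (sub_ne_zero.1 (norm_pos_iff.1 hsub))).trans ?_
    gcongr
  rw [norm_hankelKernel, mul_assoc, neg_add, Real.rpow_add hpos, Real.rpow_neg hpos.le,
    Real.rpow_neg_one]
  calc _ = Real.exp 1 * (‖z‖ * (‖hankelLine w‖ ^ lam / ‖hankelLine w ^ (lam : ℂ) - z‖) *
          ((‖hankelLine w‖ ^ lam)⁻¹ * ‖hankelLine w‖⁻¹)) := by field_simp
    _ ≤ _ := by gcongr

theorem differentiableAt_integral_hankelKernel {lam : ℝ} (hlam : 0 < lam) {z₀ : ℂ}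
    (hz₀ : z₀ ∉ (fun s : ℂ ↦ s ^ (lam : ℂ)) '' {s | 1 ≤ s.re}) :
    DifferentiableAt ℂ (fun z ↦ ∫ w, hankelKernel lam z w) z₀ := by
  obtain ⟨δ, hδ, hball⟩ := Metric.isOpen_iff.1 (isOpen_compl_image_cpow hlam) z₀ hz₀
  have hdist {z : ℂ} (hz : z ∈ Metric.ball z₀ (δ / 2)) (w : ℝ) :
      δ / 2 ≤ ‖hankelLine w ^ (lam : ℂ) - z‖ := by
    have : hankelLine w ^ (lam : ℂ) ∉ Metric.ball z₀ δ := fun h ↦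
      hball h ⟨hankelLine w, (hankelLine_re w).ge, rfl⟩
    rw [mem_ball_iff_norm, not_lt] at this
    rw [mem_ball_iff_norm] at hz
    linarith [norm_sub_le_norm_sub_add_norm_sub (hankelLine w ^ (lam : ℂ)) z z₀]
  have hnorm {z : ℂ} (hz : z ∈ Metric.ball z₀ (δ / 2)) : ‖z‖ ≤ ‖z₀‖ + δ := by
    rw [mem_ball_iff_norm] at hz
    linarith [norm_le_norm_add_norm_sub z₀ z, norm_sub_rev z z₀]
  refine differentiableAt_integral_of_norm_le (half_pos hδ) (fun z hz ↦ ?_)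
    (ae_of_all _ fun w z hz ↦ ?_) (ae_of_all _ fun w z hz ↦
      norm_hankelKernel_le_of_le_norm_sub (half_pos hδ) (hnorm hz) (hdist hz w))
    ((integrable_norm_hankelLine_rpow (by linarith)).const_mul _)
  · exact (continuous_hankelKernel fun s hs h ↦ hball
      (Metric.ball_subset_ball (by linarith) hz) ⟨s, hs, h⟩).aestronglyMeasurable
  · have := mul_ne_zero (hankelLine_ne_zero w)
      (norm_pos_iff.1 ((half_pos hδ).trans_le (hdist hz w)))
    unfold hankelKernel
    fun_prop (disch := assumption)

theorem mlE_eq_hankel {lam : ℝ} (hlam : 0 < lam) {z : ℂ}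
    (hz : ∀ s : ℂ, 1 ≤ s.re → s ^ (lam : ℂ) ≠ z) :
    mlE lam z = 1 + (2 * π : ℂ)⁻¹ * ∫ w, hankelKernel lam z w := by
  let Ω : Set ℂ := ((fun s : ℂ ↦ s ^ (lam : ℂ)) '' {s | 1 ≤ s.re})ᶜ
  have hΩ : IsOpen Ω := isOpen_compl_image_cpow hlam
  have h0 : (0 : ℂ) ∈ Ω := by
    rintro ⟨s, hs : 1 ≤ s.re, h⟩
    norm_num [((cpow_eq_zero_iff _ _).1 h).1] at hs
  have hconn : IsPreconnected Ω :=
    ((starConvex_compl_image_cpow hlam).isPathConnected h0).isConnected.isPreconnected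
  have hmlE : AnalyticOnNhd ℂ (mlE lam) Ω := fun z _ ↦ (differentiable_mlE hlam).analyticAt z
  have hhankel : AnalyticOnNhd ℂ (fun z ↦ 1 + (2 * π : ℂ)⁻¹ * ∫ w, hankelKernel lam z w) Ω :=
    DifferentiableOn.analyticOnNhd (fun z hz ↦ (((differentiableAt_integral_hankelKernel hlam
      hz).const_mul _).const_add _).differentiableWithinAt) hΩ
  refine hmlE.eqOn_of_preconnected_of_eventuallyEq hhankel hconn h0 ?_ fun ⟨s, hs, h⟩ ↦ hz s hs h
  filter_upwards [Metric.ball_mem_nhds (0 : ℂ) one_pos] with z hz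
  exact mlE_eq_hankel_of_norm_lt_one hlam (by simpa using hz)

/-! ### Growth along rays -/

theorem rpow_mul_inv_norm_cpow_sub_le {lam ε K P : ℝ} {c ζ : ℂ} (hε : 0 ≤ ε) (hεlam : ε ≤ lam)
    (hP : 1 ≤ P) (hne : ζ ^ (lam : ℂ) ≠ c) (hK : ‖ζ ^ (lam : ℂ) - c‖⁻¹ ≤ K * P) :
    ‖ζ‖ ^ ε * ‖ζ ^ (lam : ℂ) - c‖⁻¹ ≤ (1 + (1 + ‖c‖) * K) * P := by
  have hpow : ‖ζ‖ ^ ε ≤ 1 + ‖ζ‖ ^ lam := by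
    obtain h | h := le_total ‖ζ‖ 1
    · exact (Real.rpow_le_one (norm_nonneg ζ) h hε).trans (le_add_of_nonneg_right (by positivity))
    · exact (Real.rpow_le_rpow_of_exponent_le h hεlam).trans (by simp)
  have hratio := norm_div_norm_sub_le hne
  rw [norm_cpow_real, div_eq_mul_inv, div_eq_mul_inv] at hratio
  calc ‖ζ‖ ^ ε * ‖ζ ^ (lam : ℂ) - c‖⁻¹ ≤ (1 + ‖ζ‖ ^ lam) * ‖ζ ^ (lam : ℂ) - c‖⁻¹ := by gcongr
    _ ≤ 1 + (1 + ‖c‖) * ‖ζ ^ (lam : ℂ) - c‖⁻¹ := by linarith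
    _ ≤ P + (1 + ‖c‖) * (K * P) := by gcongr
    _ = (1 + (1 + ‖c‖) * K) * P := by ring

theorem one_add_div_mul_rpow_neg_le {a u x y ε : ℝ} (ha : 0 < a) (hx : 0 < x) (hy : 0 < y)
    (hε : 0 ≤ ε) (h : u * a ≤ x + y) :
    (1 + u / y) * x ^ (-(1 + ε)) ≤ (1 + 2 * a⁻¹) * (x ^ (-(1 + ε)) + y ^ (-(1 + ε))) := by
  have hmixed : x ^ (-ε) * y⁻¹ ≤ x ^ (-(1 + ε)) + y ^ (-(1 + ε)) := by
    rw [neg_add_rev, Real.rpow_add hx, Real.rpow_add hy, Real.rpow_neg_one, Real.rpow_neg_one]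
    obtain hxy | hyx := le_total x y
    · exact le_add_of_le_of_nonneg (by gcongr) (by positivity)
    · exact le_add_of_nonneg_of_le (by positivity)
        (mul_le_mul_of_nonneg_right (Real.rpow_le_rpow_of_nonpos hy hyx (by simpa))
          (by positivity))
  have hx_pow : x * x ^ (-(1 + ε)) = x ^ (-ε) := by
    rw [neg_add, Real.rpow_add hx, Real.rpow_neg_one, mul_inv_cancel_left₀ hx.ne']
  calc (1 + u / y) * x ^ (-(1 + ε)) ≤ (1 + (x + y) / a / y) * x ^ (-(1 + ε)) := by
        gcongr; exact (le_div_iff₀ ha).2 h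
    _ = (1 + a⁻¹) * x ^ (-(1 + ε)) + a⁻¹ * (x ^ (-ε) * y⁻¹) := by
        rw [← hx_pow]; field_simp; ring
    _ ≤ (1 + a⁻¹) * (x ^ (-(1 + ε)) + y ^ (-(1 + ε))) +
          a⁻¹ * (x ^ (-(1 + ε)) + y ^ (-(1 + ε))) := by
        gcongr; exact le_add_of_nonneg_right (by positivity)
    _ = _ := by ring

theorem norm_hankelKernel_mul_rpow {u : ℝ} (hu : 0 < u) (lam : ℝ) (c : ℂ) (w : ℝ) :
    ‖hankelKernel lam (c * (u ^ lam : ℝ)) w‖ =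
      Real.exp 1 * (‖c‖ * (‖hankelLine w‖⁻¹ * ‖(hankelLine w / u) ^ (lam : ℂ) - c‖⁻¹)) := by
  have hfactor : hankelLine w ^ (lam : ℂ) - c * (u ^ lam : ℝ) =
      (u ^ lam : ℝ) * ((hankelLine w / u) ^ (lam : ℂ) - c) := by
    rw [mul_sub, ofReal_cpow hu.le, ← ofReal_mul_cpow hu,
      mul_div_cancel₀ _ (ofReal_ne_zero.2 hu.ne'), mul_comm c]
  have hupow : 0 < u ^ lam := by positivity
  rw [norm_hankelKernel, hfactor, norm_mul, norm_mul, Complex.norm_of_nonneg hupow.le]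
  field_simp

theorem hankelLine_sub_mul (w u w₀ : ℝ) :
    hankelLine (w - u * w₀) = hankelLine w - u * w₀ * I := by
  simp only [hankelLine]
  push_cast
  ring

theorem inv_norm_hankelLine_div_sub {u : ℝ} (hu : 0 < u) (w w₀ : ℝ) :
    ‖hankelLine w / u - w₀ * I‖⁻¹ = u / ‖hankelLine (w - u * w₀)‖ := by
  have hu' : (u : ℂ) ≠ 0 := ofReal_ne_zero.2 hu.ne'
  have hfactor : hankelLine w / u - w₀ * I = hankelLine (w - u * w₀) / u := by
    rw [hankelLine_sub_mul]
    field_simp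
  rw [hfactor, norm_div, Complex.norm_of_nonneg hu.le, inv_div]

theorem norm_hankelKernel_le {lam ε K u w₀ : ℝ} {c : ℂ} (hε : 0 ≤ ε) (hεlam : ε ≤ lam)
    (hw₀ : w₀ ≠ 0) (hu : 0 < u) (hc : ∀ ζ : ℂ, 0 < ζ.re → ζ ^ (lam : ℂ) ≠ c)
    (hK : ∀ ζ : ℂ, 0 < ζ.re → ‖ζ ^ (lam : ℂ) - c‖⁻¹ ≤ K * (1 + ‖ζ - w₀ * I‖⁻¹)) (w : ℝ) :
    ‖hankelKernel lam (c * (u ^ lam : ℝ)) w‖ ≤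
      Real.exp 1 * (‖c‖ * ((1 + (1 + ‖c‖) * K) * (1 + 2 * |w₀|⁻¹))) * u ^ ε *
        (‖hankelLine w‖ ^ (-(1 + ε)) + ‖hankelLine (w - u * w₀)‖ ^ (-(1 + ε))) := by
  set s := ‖hankelLine w‖ with hs_def
  set p := ‖hankelLine (w - u * w₀)‖
  have hs : 0 < s := norm_hankelLine_pos w
  have hp : 0 < p := norm_hankelLine_pos _
  have hζ : 0 < (hankelLine w / u).re := by simp [hankelLine_re, hu]
  have hζ_norm : ‖hankelLine w / u‖ = s / u := by rw [norm_div, Complex.norm_of_nonneg hu.le]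
  have hdist : u * |w₀| ≤ s + p := by
    have := norm_sub_le (hankelLine w) (hankelLine (w - u * w₀))
    simpa [hankelLine_sub_mul, abs_of_pos hu, s, p] using this
  have hK₀ : 0 ≤ K := nonneg_of_mul_nonneg_left
    ((inv_nonneg.2 (norm_nonneg _)).trans (hK 1 (by simp))) (by positivity)
  have hinv := rpow_mul_inv_norm_cpow_sub_le hε hεlam
    (le_add_of_nonneg_right (by positivity)) (hc _ hζ) (hK _ hζ)
  rw [hζ_norm, inv_norm_hankelLine_div_sub hu, Real.div_rpow hs.le hu.le, div_mul_eq_mul_div,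
    div_le_iff₀ (by positivity)] at hinv
  calc ‖hankelKernel lam (c * (u ^ lam : ℝ)) w‖
      = Real.exp 1 * (‖c‖ * s ^ (-(1 + ε)) *
          (s ^ ε * ‖(hankelLine w / u) ^ (lam : ℂ) - c‖⁻¹)) := by
        have := Real.rpow_pos_of_pos hs ε
        rw [norm_hankelKernel_mul_rpow hu, ← hs_def, neg_add, Real.rpow_add hs,
          Real.rpow_neg hs.le ε, Real.rpow_neg_one]
        field_simp
    _ ≤ Real.exp 1 * (‖c‖ * s ^ (-(1 + ε)) * ((1 + (1 + ‖c‖) * K) * (1 + u / p) * u ^ ε)) := by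
        gcongr
    _ = Real.exp 1 * (‖c‖ * (1 + (1 + ‖c‖) * K)) * u ^ ε * ((1 + u / p) * s ^ (-(1 + ε))) := by
        ring
    _ ≤ Real.exp 1 * (‖c‖ * (1 + (1 + ‖c‖) * K)) * u ^ ε *
          ((1 + 2 * |w₀|⁻¹) * (s ^ (-(1 + ε)) + p ^ (-(1 + ε)))) :=
        mul_le_mul_of_nonneg_left
          (one_add_div_mul_rpow_neg_le (abs_pos.2 hw₀) hs hp hε hdist) (by positivity)
    _ = _ := by ring

theorem isBigO_mlE_of_pole_bound {lam ε K w₀ : ℝ} {c : ℂ} (hε : 0 < ε) (hεlam : ε ≤ lam)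
    (hw₀ : w₀ ≠ 0) (hc : ∀ ζ : ℂ, 0 < ζ.re → ζ ^ (lam : ℂ) ≠ c)
    (hK : ∀ ζ : ℂ, 0 < ζ.re → ‖ζ ^ (lam : ℂ) - c‖⁻¹ ≤ K * (1 + ‖ζ - w₀ * I‖⁻¹)) :
    (fun u : ℝ ↦ mlE lam (c * (u ^ lam : ℝ))) =O[atTop] fun u ↦ u ^ ε := by
  have hlam : 0 < lam := hε.trans_le hεlam
  let C := Real.exp 1 * (‖c‖ * ((1 + (1 + ‖c‖) * K) * (1 + 2 * |w₀|⁻¹)))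
  let J := ∫ w, ‖hankelLine w‖ ^ (-(1 + ε))
  have hint : Integrable fun w ↦ ‖hankelLine w‖ ^ (-(1 + ε)) :=
    integrable_norm_hankelLine_rpow (by linarith)
  have hle {u : ℝ} (hu : 0 < u) :
      ‖∫ w, hankelKernel lam (c * (u ^ lam : ℝ)) w‖ ≤ C * u ^ ε * (J + J) := by
    have hshift := hint.comp_sub_right (u * w₀)
    refine (norm_integral_le_of_norm_le ((hint.add hshift).const_mul (C * u ^ ε))
      (ae_of_all _ fun w ↦ norm_hankelKernel_le hε.le hεlam hw₀ hu hc hK w)).trans_eq ?_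
    simp only [Pi.add_apply]
    rw [integral_const_mul, integral_add hint hshift,
      integral_sub_right_eq_self (fun w ↦ ‖hankelLine w‖ ^ (-(1 + ε)))]
  have hbig : (fun u : ℝ ↦ (2 * π : ℂ)⁻¹ * ∫ w, hankelKernel lam (c * (u ^ lam : ℝ)) w)
      =O[atTop] fun u ↦ u ^ ε := by
    refine (Asymptotics.IsBigO.of_bound (C * (J + J)) ?_).const_mul_left _
    filter_upwards [eventually_gt_atTop 0] with u hu
    rw [Real.norm_of_nonneg (by positivity)]
    exact (hle hu).trans_eq (by ring)
  have hone : (fun _ : ℝ ↦ (1 : ℂ)) =O[atTop] fun u : ℝ ↦ u ^ ε := by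
    refine Asymptotics.IsBigO.of_bound 1 ?_
    filter_upwards [eventually_ge_atTop 1] with u hu
    rw [norm_one, one_mul, Real.norm_of_nonneg (by positivity)]
    exact Real.one_le_rpow hu hε.le
  refine (hone.add hbig).congr' ?_ .rfl
  filter_upwards [eventually_gt_atTop 0] with u hu
  exact (mlE_eq_hankel hlam fun s hs ↦
    mul_cpow_ne_of_forall_re_pos hu hc (one_pos.trans_le hs)).symm

theorem cpow_mul_inv_cancel {a : ℝ} (ha : a ≠ 0) {x : ℂ} (h : |a * x.arg| < π) :
    (x ^ (a : ℂ)) ^ (a⁻¹ : ℂ) = x := by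
  have him : (Complex.log x * a).im = a * x.arg := by rw [im_mul_ofReal, log_im, mul_comm]
  rw [abs_lt] at h
  rw [← cpow_mul _ (by rw [him]; exact h.1) (by rw [him]; exact h.2.le),
    mul_inv_cancel₀ (ofReal_ne_zero.2 ha), cpow_one]

theorem arg_cpow_ofReal {a : ℝ} {x : ℂ} (hx : x ≠ 0) (h : |a * x.arg| < π) :
    (x ^ (a : ℂ)).arg = a * x.arg := by
  have him : (Complex.log x * a).im = a * x.arg := by rw [im_mul_ofReal, log_im, mul_comm]
  have := abs_lt.1 h
  rw [← log_im, cpow_def_of_ne_zero hx, log_exp (by linarith) (by linarith), him]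

theorem exists_inv_norm_cpow_sub_cpow_le {a : ℝ} (ha₀ : 0 < a) (ha₂ : a < 2) {ξ : ℂ}
    (hξ : 0 ≤ ξ.re) (hξ₀ : ξ ≠ 0) :
    ∃ K : ℝ, ∀ ζ : ℂ, 0 ≤ ζ.re → ζ ≠ ξ →
      ‖ζ ^ (a : ℂ) - ξ ^ (a : ℂ)‖⁻¹ ≤ K * (1 + ‖ζ - ξ‖⁻¹) := by
  have harg {s : ℂ} (hs : 0 ≤ s.re) : |a * s.arg| < π := by
    have := abs_arg_le_pi_div_two_iff.2 hs
    rw [abs_mul, abs_of_pos ha₀]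
    nlinarith [Real.pi_pos]
  have hinverse {s : ℂ} (hs : 0 ≤ s.re) : (s ^ (a : ℂ)) ^ (a⁻¹ : ℂ) = s :=
    cpow_mul_inv_cancel ha₀.ne' (harg hs)
  have hslit : ξ ^ (a : ℂ) ∈ slitPlane := by
    rw [mem_slitPlane_iff_arg, arg_cpow_ofReal hξ₀ (harg hξ)]
    exact ⟨(abs_lt.1 (harg hξ)).2.ne, by simp [cpow_eq_zero_iff, hξ₀]⟩
  obtain ⟨C, hC₀, hC⟩ := ((differentiableAt_id (𝕜 := ℂ)).cpow_const
    (c := (a⁻¹ : ℂ)) hslit).isBigO_sub.exists_pos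
  obtain ⟨r, hr, hball⟩ := Metric.eventually_nhds_iff.1 hC.bound
  refine ⟨r⁻¹ + C, fun ζ hζ hne ↦ ?_⟩
  have hζξ : 0 < ‖ζ - ξ‖ := norm_pos_iff.2 (sub_ne_zero.2 hne)
  obtain hlt | hge := lt_or_ge ‖ζ ^ (a : ℂ) - ξ ^ (a : ℂ)‖ r
  · have hlip := hball (y := ζ ^ (a : ℂ)) (by rwa [dist_eq_norm])
    simp only [id, hinverse hζ, hinverse hξ] at hlip
    have hpos : 0 < ‖ζ ^ (a : ℂ) - ξ ^ (a : ℂ)‖ := pos_of_mul_pos_right (hζξ.trans_le hlip) hC₀.le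
    have hinv : ‖ζ ^ (a : ℂ) - ξ ^ (a : ℂ)‖⁻¹ ≤ C * ‖ζ - ξ‖⁻¹ := by
      rw [← div_eq_mul_inv, le_div_iff₀ hζξ, inv_mul_le_iff₀ hpos]
      linarith
    exact hinv.trans (mul_le_mul (by simp [hr.le]) (by simp) (by positivity) (by positivity))
  · exact (inv_anti₀ hr hge).trans ((le_add_of_nonneg_right hC₀.le).trans
      (le_mul_of_one_le_right (by positivity) (by simp)))

theorem exists_pole_bound {lam : ℝ} (hlam : 0 < lam) (hlam₂ : lam < 2) {c : ℂ} (hc₀ : c ≠ 0)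
    (hc : ∀ ζ : ℂ, 0 < ζ.re → ζ ^ (lam : ℂ) ≠ c) :
    ∃ K w₀ : ℝ, w₀ ≠ 0 ∧
      ∀ ζ : ℂ, 0 < ζ.re → ‖ζ ^ (lam : ℂ) - c‖⁻¹ ≤ K * (1 + ‖ζ - w₀ * I‖⁻¹) := by
  by_cases hmem : c ∈ (fun s : ℂ ↦ s ^ (lam : ℂ)) '' {s | 0 ≤ s.re}
  · obtain ⟨ξ, hξ : 0 ≤ ξ.re, rfl⟩ := hmem
    have hξ₀ : ξ ≠ 0 := by rintro rfl; simp [hlam.ne'] at hc₀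
    have hξ_re : ξ.re = 0 := (hξ.eq_or_lt.resolve_right fun h ↦ hc ξ h rfl).symm
    have hξ_im : ξ = ξ.im * I := by apply Complex.ext <;> simp [hξ_re]
    obtain ⟨K, hK⟩ := exists_inv_norm_cpow_sub_cpow_le hlam hlam₂ hξ hξ₀
    exact ⟨K, ξ.im, fun h ↦ hξ₀ (Complex.ext hξ_re h), fun ζ hζ ↦
      hξ_im ▸ hK ζ hζ.le fun h ↦ hζ.ne' (h ▸ hξ_re)⟩
  · have hclosed : IsClosed ((fun s : ℂ ↦ s ^ (lam : ℂ)) '' {s | 0 ≤ s.re}) :=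
      isClosed_image_cpow hlam (isClosed_le continuous_const continuous_re) fun _ hs ↦ hs
    obtain ⟨δ, hδ, hball⟩ := Metric.isOpen_iff.1 hclosed.isOpen_compl c hmem
    refine ⟨δ⁻¹, 1, one_ne_zero, fun ζ hζ ↦ ?_⟩
    have hdist : δ ≤ ‖ζ ^ (lam : ℂ) - c‖ := by
      rw [← dist_eq_norm]
      exact not_lt.1 fun h ↦ hball h ⟨ζ, hζ.le, rfl⟩
    exact (inv_anti₀ hδ hdist).trans (le_mul_of_one_le_right (by positivity) (by simp))

theorem eq_two_and_eq_neg_sq_of_forall_cpow_ne {lam : ℝ} (hlam : 2 ≤ lam) {c : ℂ} (hc₀ : c ≠ 0)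
    (hc : ∀ ζ : ℂ, 0 < ζ.re → ζ ^ (lam : ℂ) ≠ c) : lam = 2 ∧ ∃ x : ℝ, c = -(x : ℂ) ^ 2 := by
  have hlam₀ : 0 < lam := two_pos.trans_le hlam
  have harg_le := abs_arg_le_pi c
  have harg_ge : lam * (π / 2) ≤ |c.arg| := by
    by_contra! hlt
    have hscaled : |lam⁻¹ * c.arg| < π / 2 := by
      rwa [abs_mul, abs_of_pos (inv_pos.2 hlam₀), inv_mul_lt_iff₀ hlam₀]
    have hscaled_pi : |lam⁻¹ * c.arg| < π := hscaled.trans (by linarith [Real.pi_pos])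
    refine hc (c ^ ((lam⁻¹ : ℝ) : ℂ)) ?_ ?_
    · rw [← arg_cpow_ofReal hc₀ hscaled_pi, abs_arg_lt_pi_div_two_iff] at hscaled
      exact hscaled.resolve_right (by simp [cpow_eq_zero_iff, hc₀])
    · simpa using cpow_mul_inv_cancel (inv_ne_zero hlam₀.ne') hscaled_pi
  have hlam_eq : lam = 2 := by nlinarith [Real.pi_pos]
  have harg : c.arg = π := by
    subst hlam_eq
    rcases abs_cases c.arg with h | h <;> linarith [neg_pi_lt_arg c]
  refine ⟨hlam_eq, √‖c‖, ?_⟩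
  have hpolar := norm_mul_exp_arg_mul_I c
  rw [harg, exp_pi_mul_I] at hpolar
  rw [← ofReal_pow, Real.sq_sqrt (norm_nonneg c), ← mul_neg_one, hpolar]

theorem mlE_two_neg_sq (x : ℂ) : mlE 2 (-x ^ 2) = Complex.cos x := by
  rw [mlE, Complex.cos_eq_tsum]
  refine tsum_congr fun n ↦ ?_
  rw [neg_pow, ← pow_mul, ← Complex.Gamma_nat_eq_factorial]
  push_cast
  rfl

theorem isBigO_mlE_of_forall_cpow_ne {lam ε : ℝ} {c : ℂ} (hε : 0 < ε) (hεlam : ε ≤ lam)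
    (hc : ∀ ζ : ℂ, 0 < ζ.re → ζ ^ (lam : ℂ) ≠ c) :
    (fun u : ℝ ↦ mlE lam (c * (u ^ lam : ℝ))) =O[atTop] fun u ↦ u ^ ε := by
  have hlam : 0 < lam := hε.trans_le hεlam
  have hbdd {f : ℝ → ℂ} (hf : ∀ᶠ u in atTop, ‖f u‖ ≤ 1) : f =O[atTop] fun u ↦ u ^ ε := by
    refine Asymptotics.IsBigO.of_bound 1 ?_
    filter_upwards [hf, eventually_ge_atTop 1] with u hfu hu
    rw [one_mul, Real.norm_of_nonneg (by positivity)]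
    exact hfu.trans (Real.one_le_rpow hu hε.le)
  obtain rfl | hc₀ := eq_or_ne c 0
  · exact hbdd (by simp [mlE_zero])
  obtain hlam₂ | hlam₂ := lt_or_ge lam 2
  · obtain ⟨K, w₀, hw₀, hK⟩ := exists_pole_bound hlam hlam₂ hc₀ hc
    exact isBigO_mlE_of_pole_bound hε hεlam hw₀ hc hK
  · obtain ⟨rfl, x, rfl⟩ := eq_two_and_eq_neg_sq_of_forall_cpow_ne hlam₂ hc₀ hc
    refine hbdd (Eventually.of_forall fun u ↦ ?_)
    have harg : -(x : ℂ) ^ 2 * (u ^ (2 : ℝ) : ℝ) = -((x * u : ℝ) : ℂ) ^ 2 := by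
      rw [Real.rpow_two]
      push_cast
      ring
    rw [harg, mlE_two_neg_sq, ← ofReal_cos, norm_real]
    exact Real.abs_cos_le_one _

/-! ### Integrability at the origin -/

theorem isBigO_mlE_nhdsGT_zero {lam σ ε : ℝ} {c : ℂ} (hlam : 0 < lam) (hε : 0 < ε)
    (hc : 0 < σ → ∀ ζ : ℂ, 0 < ζ.re → ζ ^ (lam : ℂ) ≠ c) :
    (fun t : ℝ ↦ mlE lam (c * (t ^ (-σ) : ℝ))) =O[𝓝[>] 0] fun t ↦ t ^ (-ε) := by
  have hmono {r : ℝ} (hr : -ε ≤ r) : (fun t : ℝ ↦ t ^ r) =O[𝓝[>] 0] fun t ↦ t ^ (-ε) := by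
    refine Asymptotics.IsBigO.of_bound' ?_
    filter_upwards [Ioo_mem_nhdsGT one_pos] with t ht
    have ht₀ (x : ℝ) : 0 ≤ t ^ x := Real.rpow_nonneg ht.1.le x
    rw [Real.norm_of_nonneg (ht₀ _), Real.norm_of_nonneg (ht₀ _)]
    exact Real.rpow_le_rpow_of_exponent_ge ht.1 ht.2.le hr
  obtain hσ | hσ := le_or_gt σ 0
  · have hcont : ContinuousAt (fun t : ℝ ↦ mlE lam (c * (t ^ (-σ) : ℝ))) 0 :=
      (differentiable_mlE hlam).continuous.continuousAt.comp (.mul continuousAt_const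
        (continuous_ofReal.continuousAt.comp
          (Real.continuousAt_rpow_const 0 (-σ) (.inr (by simpa)))))
    have hone : (fun _ : ℝ ↦ (1 : ℝ)) =O[𝓝[>] 0] fun t ↦ t ^ (-ε) := by
      simpa using hmono (r := 0) (by linarith)
    exact ((hcont.tendsto.mono_left nhdsWithin_le_nhds).isBigO_one ℝ).trans hone
  · let δ := min lam (ε * lam / σ)
    have hδσ : σ / lam * δ ≤ ε := by
      calc σ / lam * δ ≤ σ / lam * (ε * lam / σ) := by gcongr; exact min_le_right _ _
        _ = ε := by field_simp
    have hlarge := (isBigO_mlE_of_forall_cpow_ne (ε := δ) (lt_min hlam (by positivity))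
      (min_le_left _ _) (hc hσ)).comp_tendsto
        (tendsto_rpow_neg_nhdsGT_zero (neg_neg_of_pos (div_pos hσ hlam)))
    refine (hlarge.congr' ?_ ?_).trans (hmono (r := -(σ / lam * δ)) (neg_le_neg hδσ))
    · filter_upwards [self_mem_nhdsWithin] with t ht
      simp only [Function.comp_apply]
      rw [← Real.rpow_mul (le_of_lt ht), neg_mul, div_mul_cancel₀ _ hlam.ne']
    · filter_upwards [self_mem_nhdsWithin] with t ht
      simp only [Function.comp_apply]
      rw [← Real.rpow_mul (le_of_lt ht), neg_mul]

theorem integrableAtFilter_of_eventuallyEq {α E : Type*} [MeasurableSpace α] {μ : Measure α}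
    [NormedAddCommGroup E] {l : Filter α} [l.IsMeasurablyGenerated] {f g : α → E}
    (hf : IntegrableAtFilter f l μ) (h : f =ᶠ[l] g) : IntegrableAtFilter g l μ := by
  obtain ⟨s, hs, hsm, hfs, heq⟩ :=
    (hf.eventually.and h.smallSets).exists_measurable_mem_of_smallSets
  exact ⟨s, hs, hfs.congr_fun heq hsm⟩

theorem integrableAtFilter_nhdsGT_iff {E : Type*} [NormedAddCommGroup E] {f : ℝ → E} {a : ℝ} :
    IntegrableAtFilter f (𝓝[>] a) ↔ ∃ b > a, IntegrableOn f (Ioo a b) := by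
  refine ⟨fun ⟨s, hs, hf⟩ ↦ ?_, fun ⟨b, hb, hf⟩ ↦ ⟨_, Ioo_mem_nhdsGT hb, hf⟩⟩
  obtain ⟨b, hb, hsub⟩ := mem_nhdsGT_iff_exists_Ioo_subset.1 hs
  exact ⟨b, hb, hf.mono_set hsub⟩

theorem integrableAtFilter_atTop_comp_rpow {E : Type*} [NormedAddCommGroup E] [NormedSpace ℝ E]
    {f : ℝ → E} {r : ℝ} (hr : r < 0) (hf : IntegrableAtFilter f (𝓝[>] 0)) :
    IntegrableAtFilter (fun u : ℝ ↦ u ^ (r - 1) • f (u ^ r)) atTop := by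
  obtain ⟨b, hb : 0 < b, hfb⟩ := integrableAtFilter_nhdsGT_iff.1 hf
  have hind : IntegrableOn ((Iio b).indicator f) (Ioi 0) := by
    rwa [IntegrableOn, integrable_indicator_iff measurableSet_Iio, IntegrableOn,
      Measure.restrict_restrict measurableSet_Iio, Iio_inter_Ioi]
  have hcomp : IntegrableOn
      (fun u : ℝ ↦ |r|⁻¹ • ((|r| * u ^ (r - 1)) • (Iio b).indicator f (u ^ r))) (Ioi 0) :=
    ((integrableOn_Ioi_comp_rpow_iff _ hr.ne).2 hind).smul |r|⁻¹
  have hlim : Tendsto (fun u : ℝ ↦ u ^ r) atTop (𝓝 0) := by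
    simpa using tendsto_rpow_neg_atTop (neg_pos.2 hr)
  have hlarge : ∀ᶠ u : ℝ in atTop, 0 < u ∧ u ^ r < b :=
    (eventually_gt_atTop 0).and (hlim.eventually_lt_const hb)
  obtain ⟨R, hR⟩ := eventually_atTop.1 hlarge
  refine integrableAtFilter_atTop_iff.2 ⟨R, (hcomp.mono_set fun u hu ↦ (hR u hu).1).congr_fun
    (fun u hu ↦ ?_) measurableSet_Ici⟩
  beta_reduce
  rw [indicator_of_mem (mem_Iio.2 (hR u hu).2), smul_smul,
    inv_mul_cancel_left₀ (by simpa using hr.ne)]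

theorem continuousOn_rpow_mul_mlE {lam : ℝ} (hlam : 0 < lam) (σ : ℝ) (a c : ℂ) :
    ContinuousOn (fun t : ℝ ↦ (t : ℂ) ^ a * mlE lam (c * (t ^ (-σ) : ℝ))) (Ioi 0) := by
  intro t (ht : 0 < t)
  refine (ContinuousAt.mul (continuousAt_ofReal_cpow_const t a (.inr ht.ne'))
    ((differentiable_mlE hlam).continuous.continuousAt.comp (.mul continuousAt_const
      (continuous_ofReal.continuousAt.comp
        (Real.continuousAt_rpow_const t (-σ) (.inl ht.ne')))))).continuousWithinAt

theorem not_integrableAtFilter_rpow_mul_mlE_nhdsGT_zero {lam σ : ℝ} (hlam : 0 < lam) (hσ : 0 < σ)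
    {s : ℂ} (hs : 0 < s.re) (r : ℝ) : ¬ IntegrableAtFilter
      (fun t : ℝ ↦ (t : ℂ) ^ (r : ℂ) * mlE lam (s ^ (lam : ℂ) * (t ^ (-σ) : ℝ))) (𝓝[>] 0) := by
  intro h
  let e := -(lam / σ)
  have he : e < 0 := neg_neg_of_pos (div_pos hlam hσ)
  refine not_integrableAtFilter_rpow_mul_mlE hlam hs (e - 1 + e * r) ?_
  refine integrableAtFilter_of_eventuallyEq (integrableAtFilter_atTop_comp_rpow he h) ?_
  filter_upwards [eventually_gt_atTop 0] with u hu
  have hlam_eq : (u ^ e) ^ (-σ) = u ^ lam := by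
    rw [← Real.rpow_mul hu.le, neg_mul_neg, div_mul_cancel₀ _ hσ.ne']
  rw [hlam_eq, ← ofReal_cpow (by positivity), ← ofReal_cpow hu.le, ← Real.rpow_mul hu.le,
    real_smul, ← mul_assoc, ← ofReal_mul, ← Real.rpow_add hu]

theorem integrableAtFilter_cpow_mul_mlE {lam σ : ℝ} {a c : ℂ} (hlam : 0 < lam) (ha : -1 < a.re)
    (hc : 0 < σ → ∀ ζ : ℂ, 0 < ζ.re → ζ ^ (lam : ℂ) ≠ c) :
    IntegrableAtFilter (fun t : ℝ ↦ (t : ℂ) ^ a * mlE lam (c * (t ^ (-σ) : ℝ))) (𝓝[>] 0) := by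
  obtain ⟨ε, hε, hεa⟩ : ∃ ε > 0, -1 < a.re - ε := ⟨(a.re + 1) / 2, by linarith, by linarith⟩
  have hpow : (fun t : ℝ ↦ (t : ℂ) ^ a) =O[𝓝[>] 0] fun t ↦ t ^ a.re :=
    .of_bound' <| by
      filter_upwards [self_mem_nhdsWithin] with t ht
      rw [norm_cpow_eq_rpow_re_of_pos ht]
      exact le_abs_self _
  refine ((hpow.mul (isBigO_mlE_nhdsGT_zero hlam hε hc)).congr' .rfl ?_).integrableAtFilter
    ((continuousOn_rpow_mul_mlE hlam σ a c).stronglyMeasurableAtFilter_nhdsWithin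
      measurableSet_Ioi 0)
    (integrableAtFilter_nhdsGT_iff.2
      ⟨1, one_pos, (intervalIntegral.integrableOn_Ioo_rpow_iff one_pos).2 hεa⟩)
  filter_upwards [self_mem_nhdsWithin] with t ht
  rw [sub_eq_add_neg, Real.rpow_add ht]

theorem exists_pow_isBigO_of_analyticAt {h : ℂ → ℂ} (hh : AnalyticAt ℂ h 0)
    (hne : ¬ ∀ᶠ z in 𝓝 0, h z = 0) : ∃ m : ℕ, (fun z ↦ z ^ m) =O[𝓝 0] h := by
  obtain ⟨m, g, hg, hg₀, hfactor⟩ := hh.exists_eventuallyEq_pow_smul_nonzero_iff.2 hne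
  refine ⟨m, Asymptotics.IsBigO.congr' (f₁ := fun z ↦ h z * (g z)⁻¹) ?_ ?_ .rfl⟩
  · simpa using (Asymptotics.isBigO_refl h (𝓝 0)).mul ((hg.continuousAt.inv₀ hg₀).isBigO_one ℂ)
  · filter_upwards [hfactor, hg.continuousAt.eventually_ne hg₀] with z hz hgz
    rw [hz, sub_zero, smul_eq_mul, mul_inv_cancel_right₀ hgz]

theorem tendsto_ofReal_nhdsGT_zero : Tendsto ((↑) : ℝ → ℂ) (𝓝[>] 0) (𝓝 0) :=
  (continuous_ofReal.tendsto' 0 0 ofReal_zero).mono_left nhdsWithin_le_nhds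

theorem isBigO_ofReal_cpow_of_pow_isBigO {h : ℂ → ℂ} {m : ℕ}
    (hm : (fun z ↦ z ^ m) =O[𝓝 0] h) (n : ℕ) (a : ℂ) :
    (fun t : ℝ ↦ (t : ℂ) ^ ((n + a.re + m : ℝ) : ℂ)) =O[𝓝[>] 0]
      fun t ↦ (t : ℂ) ^ n * (t : ℂ) ^ a * h t := by
  refine .trans (g := fun t : ℝ ↦ (t : ℂ) ^ n * (t : ℂ) ^ a * (t : ℂ) ^ m) (.of_bound' ?_)
    ((Asymptotics.isBigO_refl _ _).mul (hm.comp_tendsto tendsto_ofReal_nhdsGT_zero))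
  filter_upwards [self_mem_nhdsWithin] with t (ht : 0 < t)
  simp only [norm_mul, norm_pow, norm_cpow_eq_rpow_re_of_pos ht, ofReal_re, norm_real,
    Real.norm_of_nonneg ht.le]
  rw [Real.rpow_add ht, Real.rpow_add ht, Real.rpow_natCast, Real.rpow_natCast]

theorem integrableAtFilter_of_pow_mul {lam σ : ℝ} {a c : ℂ} (hlam : 0 < lam) (ha : -1 < a.re)
    {h : ℂ → ℂ} (hh : AnalyticAt ℂ h 0) {n : ℕ}
    (hint : IntegrableAtFilter (fun t : ℝ ↦ (t : ℂ) ^ n *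
      ((t : ℂ) ^ a * mlE lam (c * (t ^ (-σ) : ℝ)) * h t)) (𝓝[>] 0)) :
    IntegrableAtFilter (fun t : ℝ ↦ (t : ℂ) ^ a * mlE lam (c * (t ^ (-σ) : ℝ)) * h t) (𝓝[>] 0) := by
  by_cases hvanish : ∀ᶠ z in 𝓝 0, h z = 0
  · refine integrableAtFilter_of_eventuallyEq (integrableAtFilter_zero (E := ℂ)) ?_
    filter_upwards [tendsto_ofReal_nhdsGT_zero.eventually hvanish] with t ht
    simp [ht]
  by_cases hc : 0 < σ → ∀ ζ : ℂ, 0 < ζ.re → ζ ^ (lam : ℂ) ≠ c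
  · have hcont : ∀ᶠ t : ℝ in 𝓝[>] 0, ContinuousAt (fun t : ℝ ↦ h t) t :=
      (tendsto_ofReal_nhdsGT_zero.eventually hh.eventually_analyticAt).mono fun t ht ↦
        ht.continuousAt.comp continuous_ofReal.continuousAt
    obtain ⟨b, hb, hcont⟩ := mem_nhdsGT_iff_exists_Ioo_subset.1 hcont
    refine Asymptotics.IsBigO.integrableAtFilter ?_ ⟨Ioo 0 b, Ioo_mem_nhdsGT hb,
      ContinuousOn.aestronglyMeasurable (((continuousOn_rpow_mul_mlE hlam σ a c).mono
        Ioo_subset_Ioi_self).mul fun t ht ↦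
        ContinuousAt.continuousWithinAt (f := fun t : ℝ ↦ h t) (hcont ht)) measurableSet_Ioo⟩
      (integrableAtFilter_cpow_mul_mlE hlam ha hc)
    simpa using (Asymptotics.isBigO_refl (fun t : ℝ ↦ (t : ℂ) ^ a * mlE lam (c * (t ^ (-σ) : ℝ)))
      (𝓝[>] 0)).mul ((hh.continuousAt.tendsto.comp tendsto_ofReal_nhdsGT_zero).isBigO_one ℂ)
  · push Not at hc
    obtain ⟨hσ, s, hs, rfl⟩ := hc
    obtain ⟨m, hm⟩ := exists_pow_isBigO_of_analyticAt hh hvanish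
    refine (not_integrableAtFilter_rpow_mul_mlE_nhdsGT_zero hlam hσ hs (n + a.re + m) ?_).elim
    refine Asymptotics.IsBigO.integrableAtFilter ?_
      ((continuousOn_rpow_mul_mlE hlam σ _ _).stronglyMeasurableAtFilter_nhdsWithin
        measurableSet_Ioi 0) hint
    refine ((isBigO_ofReal_cpow_of_pow_isBigO hm n a).mul (Asymptotics.isBigO_refl (fun t : ℝ ↦
      mlE lam (s ^ (lam : ℂ) * (t ^ (-σ) : ℝ))) _)).congr_right fun t ↦ ?_
    ring

/-! ### The exponential series -/

/-- The integrand of the extended beta function, with the exponents `a` and `b` of `t` and `1 - t`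
standing for `η₁ - 1` and `η₂ - 1`. -/
noncomputable def extBetaWeight (lam sig tau : ℝ) (p q a b : ℂ) (t : ℝ) : ℂ :=
  (t : ℂ) ^ a * (1 - (t : ℂ)) ^ b *
    mlE lam (-p / (t : ℂ) ^ (sig : ℂ)) * mlE lam (-q / (1 - (t : ℂ)) ^ (tau : ℂ))

theorem integrableOn_Ioo_of_pow_mul {f : ℝ → ℂ} {n : ℕ} {b : ℝ}
    (hzero : IntegrableAtFilter f (𝓝[>] 0))
    (hf : IntegrableOn (fun t : ℝ ↦ (t : ℂ) ^ n * f t) (Ioo 0 b)) : IntegrableOn f (Ioo 0 b) := by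
  obtain ⟨δ, hδ : 0 < δ, hnear⟩ := integrableAtFilter_nhdsGT_iff.1 hzero
  have hpow (t : ℝ) (ht : t ∈ Icc δ b) : (t : ℂ) ^ n ≠ 0 :=
    pow_ne_zero n (ofReal_ne_zero.2 (hδ.trans_le ht.1).ne')
  have hmul : IntegrableOn (fun t : ℝ ↦ (t : ℂ) ^ n * f t) (Icc δ b) :=
    (integrableOn_Icc_iff_integrableOn_Ioo enorm_ne_top enorm_ne_top).2
      (hf.mono_set (Ioo_subset_Ioo_left hδ.le))
  have hfar : IntegrableOn (fun t : ℝ ↦ ((t : ℂ) ^ n)⁻¹ * ((t : ℂ) ^ n * f t)) (Icc δ b) :=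
    hmul.continuousOn_mul (ContinuousOn.inv₀ (by fun_prop) hpow) isCompact_Icc
  refine (hnear.union (hfar.congr_fun (fun t ht ↦ inv_mul_cancel_left₀ (hpow t ht) _)
    measurableSet_Icc)).mono_set fun t ht ↦ ?_
  exact (lt_or_ge t δ).imp (⟨ht.1, ·⟩) (⟨·, ht.2.le⟩)

theorem integrableOn_Ioo_of_exp_mul {f : ℝ → ℂ} {z : ℂ} {a b : ℝ}
    (hf : IntegrableOn (fun t : ℝ ↦ Complex.exp (z * t) * f t) (Ioo a b)) :
    IntegrableOn f (Ioo a b) := by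
  rw [← integrableOn_Icc_iff_integrableOn_Ioo] at hf ⊢
  have hexp : ContinuousOn (fun t : ℝ ↦ Complex.exp (-(z * t))) (Icc a b) := by fun_prop
  refine (hf.continuousOn_mul hexp isCompact_Icc).congr_fun (fun t _ ↦ ?_) measurableSet_Icc
  beta_reduce
  rw [← mul_assoc, ← Complex.exp_add, neg_add_cancel, Complex.exp_zero, one_mul]

theorem integrableOn_extBetaWeight_of_pow_mul {lam sig tau : ℝ} {p q a b : ℂ} (hlam : 0 < lam)
    (ha : -1 < a.re) {n : ℕ}
    (hint : IntegrableOn (fun t : ℝ ↦ (t : ℂ) ^ n * extBetaWeight lam sig tau p q a b t)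
      (Ioo 0 1)) :
    IntegrableOn (extBetaWeight lam sig tau p q a b) (Ioo 0 1) := by
  let h : ℂ → ℂ := fun z ↦ (1 - z) ^ b * mlE lam (-q / (1 - z) ^ (tau : ℂ))
  have hsub : AnalyticAt ℂ (fun z : ℂ ↦ 1 - z) 0 := by fun_prop
  have hcpow (c : ℂ) : AnalyticAt ℂ (fun z : ℂ ↦ (1 - z) ^ c) 0 :=
    hsub.cpow analyticAt_const (by simp)
  have hh : AnalyticAt ℂ h 0 := (hcpow b).mul <| ((differentiable_mlE hlam).analyticAt _).comp
    (analyticAt_const.div (hcpow tau) (by simp))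
  have hfactor : EqOn (extBetaWeight lam sig tau p q a b)
      (fun t ↦ (t : ℂ) ^ a * mlE lam (-p * (t ^ (-sig) : ℝ)) * h t) (Ioi 0) := by
    intro t (ht : 0 < t)
    simp only [extBetaWeight, h]
    rw [Real.rpow_neg ht.le, ofReal_inv, ofReal_cpow ht.le, ← div_eq_mul_inv]
    ring
  refine integrableOn_Ioo_of_pow_mul (integrableAtFilter_of_eventuallyEq
    (integrableAtFilter_of_pow_mul hlam ha hh (n := n) (c := -p) (σ := sig) ?_)
    (hfactor.symm.eventuallyEq_of_mem self_mem_nhdsWithin)) hint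
  refine integrableAtFilter_of_eventuallyEq ⟨_, Ioo_mem_nhdsGT one_pos, hint⟩ ?_
  filter_upwards [self_mem_nhdsWithin] with t ht
  rw [hfactor ht]

theorem hasSum_integral_pow_mul {α : Type*} [MeasurableSpace α] {μ : Measure α} {f g : α → ℂ}
    {C : ℝ} (hf : Integrable f μ) (hg : AEStronglyMeasurable g μ) (hC : ∀ᵐ x ∂μ, ‖g x‖ ≤ C)
    (z : ℂ) : HasSum (fun n : ℕ ↦ (∫ x, g x ^ n * f x ∂μ) * z ^ n / n.factorial)
      (∫ x, Complex.exp (z * g x) * f x ∂μ) := by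
  let bound (n : ℕ) (x : α) : ℝ := (‖z‖ * C) ^ n / n.factorial * ‖f x‖
  have hbound_summable := Real.summable_pow_div_factorial (‖z‖ * C)
  have hsum : HasSum (fun n : ℕ ↦ ∫ x, (z * g x) ^ n / n.factorial * f x ∂μ)
      (∫ x, Complex.exp (z * g x) * f x ∂μ) := by
    refine hasSum_integral_of_dominated_convergence bound (fun n ↦ ?_) (fun n ↦ ?_)
      (ae_of_all _ fun x ↦ hbound_summable.mul_right _) ?_ (ae_of_all _ fun x ↦ ?_)
    · simp only [div_eq_mul_inv]
      exact (((hg.const_mul z).pow n).mul_const _).mul hf.aestronglyMeasurable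
    · filter_upwards [hC] with x hx
      rw [norm_mul, norm_div, norm_pow, norm_mul, Complex.norm_natCast]
      simp only [bound]
      gcongr
    · simpa only [bound, tsum_mul_right] using hf.norm.const_mul _
    · rw [Complex.exp_eq_exp_ℂ]
      exact (NormedSpace.expSeries_div_hasSum_exp (z * g x)).mul_right _
  refine hsum.congr_fun fun n ↦ ?_
  rw [mul_div_assoc, ← integral_mul_const]
  congr 1 with x
  ring

theorem extBeta_add_natCast (lam sig tau : ℝ) (p q e1 e2 : ℂ) (n : ℕ) :
    extBeta lam sig tau p q (e1 + n) e2 = ∫ t in Ioo (0 : ℝ) 1,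
      (t : ℂ) ^ n * extBetaWeight lam sig tau p q (e1 - 1) (e2 - 1) t := by
  refine setIntegral_congr_fun measurableSet_Ioo fun t ht ↦ ?_
  simp only [extBetaWeight]
  rw [add_sub_right_comm, cpow_add _ _ (ofReal_ne_zero.2 ht.1.ne'), cpow_natCast]
  ring

theorem extPhi_integral_repr_general {lam : ℝ} (hlam : 0 < lam) (sig tau : ℝ) (p q : ℂ) {e1 : ℂ}
    (he1 : 0 < e1.re) (e2 z : ℂ) :
    HasSum (fun n : ℕ ↦ extBeta lam sig tau p q (e1 + n) e2 * z ^ n / n.factorial)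
      (∫ t in Ioo (0 : ℝ) 1, (t : ℂ) ^ (e1 - 1) * (1 - (t : ℂ)) ^ (e2 - 1) * Complex.exp (z * t) *
        mlE lam (-p / (t : ℂ) ^ (sig : ℂ)) * mlE lam (-q / (1 - (t : ℂ)) ^ (tau : ℂ))) := by
  let w := extBetaWeight lam sig tau p q (e1 - 1) (e2 - 1)
  have hexp : HasSum (fun n : ℕ ↦ (∫ t in Ioo (0 : ℝ) 1, (t : ℂ) ^ n * w t) * z ^ n / n.factorial)
      (∫ t in Ioo (0 : ℝ) 1, Complex.exp (z * t) * w t) := by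
    by_cases hw : IntegrableOn w (Ioo 0 1)
    · refine hasSum_integral_pow_mul (C := 1) hw (by fun_prop) ?_ z
      filter_upwards [ae_restrict_mem measurableSet_Ioo] with t ht
      simpa [abs_of_pos ht.1] using ht.2.le
    · have hmoment (n : ℕ) : ∫ t in Ioo (0 : ℝ) 1, (t : ℂ) ^ n * w t = 0 := integral_undef fun h ↦
        hw (integrableOn_extBetaWeight_of_pow_mul hlam (by simpa using he1) h)
      rw [integral_undef fun h ↦ hw (integrableOn_Ioo_of_exp_mul h)]
      simpa only [hmoment, zero_mul, zero_div] using hasSum_zero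
  simp only [extBeta_add_natCast]
  convert hexp using 3 with t
  simp only [w, extBetaWeight]
  ring

theorem extPhi_integral_repr (lam sig tau : ℝ) (hlam : 0 < lam) (hsig : 0 < sig)
    (htau : 0 < tau) (p q e2 e3 z : ℂ) (hp : 0 < p.re) (hq : 0 < q.re)
    (he2 : 0 < e2.re) (he23 : e2.re < e3.re) :
    extPhi lam sig tau p q e2 e3 z
      = 1 / Complex.betaIntegral e2 (e3 - e2) *
          ∫ t in Ioo (0:ℝ) 1,
            (t : ℂ) ^ (e2 - 1) * (1 - (t : ℂ)) ^ (e3 - e2 - 1) * Complex.exp (z * t) *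
              mlE lam (-p / (t : ℂ) ^ (sig : ℂ)) *
              mlE lam (-q / (1 - (t : ℂ)) ^ (tau : ℂ)) := by
  rw [extPhi, ← (extPhi_integral_repr_general hlam sig tau p q he2 (e3 - e2) z).tsum_eq,
    ← tsum_mul_left]
  exact tsum_congr fun n ↦ by ring
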